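/- For all n ≥ 1, D_n(q) = sum over k with 2 ≤ 2k ≤ n-1 of ((1 - q^{2k})/(1 - q)) * ((q^{2k+2}; q)_{n-2k-1} / (1 - q)^{n-2k-1}) * q^{binom(2k,2)} + q^{binom(n,2)} * χ(n even), where D_n(q) is the generating polynomial for derangements of order n by major index. In particular D_n(q) is a polynomial in q with nonnegative integer coefficients. -/

import Mathlib

open Finset

attribute [local instance] Classical.propDecidable

noncomputable section

/-- The word `x_1 x_2 ... x_n` (0-indexed) of a signed permutation of order `n`,
encoded as a pair (permutation, signs): `x_i = ±(σ(i)+1)`. -/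
def sword (n : ℕ) (w : Equiv.Perm (Fin n) × (Fin n → Bool)) : ℕ → ℤ :=
  fun i => if h : i < n then
      (if w.2 ⟨i, h⟩ then -(((w.1 ⟨i, h⟩ : ℕ) : ℤ) + 1) else (((w.1 ⟨i, h⟩ : ℕ) : ℤ) + 1))
    else 0

/-- number of negative letters -/
def negStat (n : ℕ) (x : ℕ → ℤ) : ℕ := ((Finset.range n).filter (fun i => x i < 0)).card

/-- number of positive fixed points (`x_i = i`, 1-indexed) -/
def fixPlus (n : ℕ) (x : ℕ → ℤ) : ℕ :=
  ((Finset.range n).filter (fun i => x i = (i : ℤ) + 1)).card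

/-- number of negative fixed points (`x_i = -i`, 1-indexed) -/
def fixMinus (n : ℕ) (x : ℕ → ℤ) : ℕ :=
  ((Finset.range n).filter (fun i => x i = -((i : ℤ) + 1))).card

/-- major index of the word -/
def majStat (n : ℕ) (x : ℕ → ℤ) : ℕ :=
  ∑ i ∈ Finset.range (n - 1), if x (i + 1) < x i then i + 1 else 0

/-- number of inversions of the word -/
def invStat (n : ℕ) (x : ℕ → ℤ) : ℕ :=
  ((Finset.range n ×ˢ Finset.range n).filter (fun p => p.1 < p.2 ∧ x p.2 < x p.1)).card

/-- length function `ℓ(w) = inv w + ∑_{x_i<0} |x_i|` -/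
def lenStat (n : ℕ) (x : ℕ → ℤ) : ℕ :=
  invStat n x + ∑ i ∈ Finset.range n, if x i < 0 then (x i).natAbs else 0

/-- flag-major index `fmaj = 2 maj + neg` -/
def fmajStat (n : ℕ) (x : ℕ → ℤ) : ℕ := 2 * majStat n x + negStat n x

/-- the word `x_0 ... x_{m-1}` has its leftmost trough at position `2k` (1-indexed):
`x_1 > x_2 > ... > x_{2k}` and `x_{2k} < x_{2k+1}` (with `x_{m+1} = ∞`). -/
def IsDesarAt (m k : ℕ) (x : ℕ → ℤ) : Prop :=
  1 ≤ k ∧ 2 * k ≤ m ∧ (∀ i, i + 1 < 2 * k → x (i + 1) < x i) ∧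
    (2 * k = m ∨ x (2 * k - 1) < x (2 * k))

/-- a word of length `m` is a desarrangement (empty word included) -/
def IsDesar (m : ℕ) (x : ℕ → ℤ) : Prop :=
  m = 0 ∨ ∃ k, IsDesarAt m k x

/-- the length of the longest right factor of the word of length `n`
which is a desarrangement -/
def dlen (n : ℕ) (x : ℕ → ℤ) : ℕ :=
  sSup {m | m ≤ n ∧ IsDesar m (fun i => x (n - m + i))}

/-- number of letters of `w^-` in the pixed factorization `w = w^- w^+ w^d` -/
def pixMinus (n : ℕ) (x : ℕ → ℤ) : ℕ :=
  ((Finset.range (n - dlen n x)).filter (fun i => x i < 0)).card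

/-- number of letters of `w^+` in the pixed factorization `w = w^- w^+ w^d` -/
def pixPlus (n : ℕ) (x : ℕ → ℤ) : ℕ :=
  ((Finset.range (n - dlen n x)).filter (fun i => 0 < x i)).card

/-- the number of derangements of an `m`-element set -/
def dnum (m : ℕ) : ℕ :=
  (Finset.univ.filter (fun σ : Equiv.Perm (Fin m) => ∀ i, σ i ≠ i)).card

/-- the word of an ordinary permutation of `{1, ..., m}` -/
def pword (m : ℕ) (σ : Equiv.Perm (Fin m)) : ℕ → ℤ :=
  fun i => if h : i < m then ((σ ⟨i, h⟩ : ℕ) : ℤ) + 1 else 0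

/-- the q-ascending factorial `(q;q)_m` -/
def qq {K : Type*} [CommRing K] (q : K) (m : ℕ) : K :=
  ∏ i ∈ Finset.range m, (1 - q ^ (i + 1))

/-- `D_m(q)`: generating polynomial for derangements of order `m` by major index -/
def Dmaj {K : Type*} [CommRing K] (q : K) (m : ℕ) : K :=
  ∑ σ ∈ Finset.univ.filter (fun σ : Equiv.Perm (Fin m) => ∀ i, σ i ≠ i),
    q ^ majStat m (pword m σ)


/-- Gaussian binomial coefficient. -/
def qB {K : Type*} [CommRing K] (q : K) : ℕ → ℕ → K
  | _, 0 => 1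
  | 0, _ + 1 => 0
  | n + 1, k + 1 => qB q n k + q ^ (k + 1) * qB q n (k + 1)

/-- The `q`-integer. -/
def qI {K : Type*} [CommRing K] (q : K) (n : ℕ) : K := ∑ i ∈ Finset.range n, q ^ i

/-- The sequence defined by the recurrence of the `q`-derangement numbers. -/
def qR {K : Type*} [CommRing K] (q : K) : ℕ → K
  | 0 => 1
  | n + 1 => qI q (n + 1) * qR q n + (-1) ^ (n + 1) * q ^ Nat.choose (n + 1) 2

section aux
variable {K : Type*} [CommRing K] (q : K)

theorem qB_zero_right (n : ℕ) : qB q n 0 = 1 := by cases n <;> rfl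

theorem qB_zero_succ (k : ℕ) : qB q 0 (k + 1) = 0 := rfl

theorem qB_pascal (n k : ℕ) :
    qB q (n + 1) (k + 1) = qB q n k + q ^ (k + 1) * qB q n (k + 1) := rfl

theorem qB_eq_zero (n : ℕ) : ∀ k, n < k → qB q n k = 0 := by
  induction n with
  | zero =>
    intro k hk
    cases k with
    | zero => omega
    | succ k => rfl
  | succ n ih =>
    intro k hk
    cases k with
    | zero => omega
    | succ k => rw [qB_pascal, ih k (by omega), ih (k + 1) (by omega)]; ring

theorem qB_self (n : ℕ) : qB q n n = 1 := by
  induction n with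
  | zero => rfl
  | succ n ih => rw [qB_pascal, ih, qB_eq_zero q n (n + 1) (by omega)]; ring

theorem qB_pascal' (n : ℕ) : ∀ k,
    qB q (n + 1) (k + 1) = q ^ (n - k) * qB q n k + qB q n (k + 1) := by
  induction n with
  | zero =>
    intro k
    rw [qB_pascal]
    cases k <;> simp [qB_zero_succ, qB_zero_right]
  | succ n ih =>
    intro k
    rcases lt_or_ge n k with h | h
    · rw [qB_pascal, qB_eq_zero q (n + 1) (k + 1) (by omega), Nat.sub_eq_zero_of_le (by omega)]
      ring
    · cases k with
      | zero =>
        have a := ih 0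
        have c := qB_pascal q n 0
        have d := qB_pascal q (n + 1) 0
        simp only [qB_zero_right, Nat.sub_zero, zero_add] at a c d ⊢
        linear_combination d + q * a - c
      | succ k =>
        have a := ih k
        have b := ih (k + 1)
        have c := qB_pascal q n k
        have d := qB_pascal q n (k + 1)
        have e := qB_pascal q (n + 1) (k + 1)
        have f : q ^ (n - k) = q * q ^ (n - (k + 1)) := by
          rw [← pow_succ']; congr 1; omega
        have g : n + 1 - (k + 1) = n - k := by omega
        rw [g]
        rw [f] at a ⊢
        linear_combination e + a + q ^ (k + 2) * b - q * q ^ (n - (k + 1)) * c - d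

theorem qI_succ (n : ℕ) : qI q (n + 1) = qI q n + q ^ n := Finset.sum_range_succ _ _

theorem qI_add (m n : ℕ) : qI q (m + n) = qI q m + q ^ m * qI q n := by
  unfold qI
  rw [Finset.sum_range_add, Finset.mul_sum]
  simp [pow_add]

theorem qB_succ_self (n : ℕ) : qB q (n + 1) n = qI q (n + 1) := by
  induction n with
  | zero => simp [qB_zero_right, qI]
  | succ n ih => rw [qB_pascal, ih, qB_self, qI_succ q (n + 1)]; ring

theorem qB_absorb (n : ℕ) : ∀ k, k ≤ n →
    qI q (k + 1) * qB q (n + 1) (k + 1) = qI q (n + 1) * qB q n k ∧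
    qI q (k + 1) * qB q n (k + 1) = qI q (n - k) * qB q n k := by
  have key : ∀ n k, k ≤ n → qI q (k + 1) * qB q n (k + 1) = qI q (n - k) * qB q n k →
      qI q (k + 1) * qB q (n + 1) (k + 1) = qI q (n + 1) * qB q n k := by
    intro n k hk h
    have := qI_add q (k + 1) (n - k)
    rw [show k + 1 + (n - k) = n + 1 by omega] at this
    rw [qB_pascal, this]
    linear_combination q ^ (k + 1) * h
  suffices H : ∀ k, k ≤ n →
      qI q (k + 1) * qB q n (k + 1) = qI q (n - k) * qB q n k from
    fun k hk => ⟨key n k hk (H k hk), H k hk⟩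
  induction n with
  | zero =>
    intro k hk
    obtain rfl : k = 0 := by omega
    simp [qI, qB]
  | succ n ih =>
    intro k hk
    rcases Nat.eq_or_lt_of_le hk with h | h
    · subst h
      rw [qB_eq_zero q _ _ (Nat.lt_succ_self _)]
      simp [qI]
    · rw [key n k (by omega) (ih k (by omega))]
      cases k with
      | zero => simp [qB_zero_right]
      | succ k =>
        have a := ih k (by omega)
        have b := qB_pascal' q n k
        have c := qI_add q (n - k) (k + 1)
        rw [show n - k + (k + 1) = n + 1 by omega] at c
        rw [show n + 1 - (k + 1) = n - k by omega, b, c]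
        linear_combination q ^ (n - k) * a

theorem qB_alt (n : ℕ) :
    ∑ m ∈ Finset.range (n + 2), qB q (n + 1) m * ((-1) ^ m * q ^ Nat.choose m 2) = 0 := by
  have H : ∀ N, ∑ m ∈ Finset.range (N + 1), qB q (n + 1) m * ((-1) ^ m * q ^ Nat.choose m 2)
      = (-1) ^ N * q ^ Nat.choose (N + 1) 2 * qB q n N := by
    intro N
    induction N with
    | zero => simp [qB_zero_right]
    | succ N ih =>
      rw [Finset.sum_range_succ, ih, qB_pascal]
      have : Nat.choose (N + 1 + 1) 2 = (N + 1) + Nat.choose (N + 1) 2 := by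
        rw [Nat.choose_succ_succ' (N + 1) 1, Nat.choose_one_right]
      rw [this, pow_add, pow_succ (-1 : K) N]
      ring
  rw [H (n + 1), qB_eq_zero q n (n + 1) (by omega), mul_zero]

theorem qR_sum (n : ℕ) :
    ∑ m ∈ Finset.range (n + 1), qB q n m * qR q m = ∏ i ∈ Finset.range n, qI q (i + 1) := by
  induction n with
  | zero => simp [qB_zero_right, qR]
  | succ n ih =>
    rw [Finset.prod_range_succ, ← ih, Finset.sum_range_succ']
    have h := qB_alt q n
    rw [Finset.sum_range_succ'] at h
    have : ∑ k ∈ Finset.range (n + 1), qB q (n + 1) (k + 1) * qR q (k + 1)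
        = qI q (n + 1) * ∑ k ∈ Finset.range (n + 1), qB q n k * qR q k
        + ∑ k ∈ Finset.range (n + 1),
          qB q (n + 1) (k + 1) * ((-1) ^ (k + 1) * q ^ Nat.choose (k + 1) 2) := by
      rw [Finset.mul_sum, ← Finset.sum_add_distrib]
      refine Finset.sum_congr rfl fun k hk => ?_
      have := (qB_absorb q n k (by simp at hk; omega)).1
      rw [qR]
      linear_combination qR q k * this
    rw [this]
    simp only [qB_zero_right, qR] at h ⊢
    simp at h ⊢
    linear_combination h

/-- uniqueness -/
theorem eq_qR (D : ℕ → K)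
    (hD : ∀ n, ∑ m ∈ Finset.range (n + 1), qB q n m * D m = ∏ i ∈ Finset.range n, qI q (i + 1))
    (n : ℕ) : D n = qR q n := by
  induction n using Nat.strong_induction_on with
  | _ n ih =>
    have h := (hD n).trans (qR_sum q n).symm
    rw [Finset.sum_range_succ, Finset.sum_range_succ, qB_self] at h
    have : ∑ m ∈ Finset.range n, qB q n m * D m = ∑ m ∈ Finset.range n, qB q n m * qR q m :=
      Finset.sum_congr rfl fun m hm => by rw [ih m (Finset.mem_range.1 hm)]
    rw [this] at h
    linear_combination h

end aux

theorem qR_closed {K : Type*} [Field K] (q : K) (h1 : (1 : K) - q ≠ 0) (n : ℕ) :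
    qR q (n + 1)
      = (∑ k ∈ (Finset.range (n + 1 + 1)).filter (fun k => 2 ≤ 2 * k ∧ 2 * k ≤ n + 1 - 1),
          ((1 - q ^ (2 * k)) / (1 - q))
            * ((∏ i ∈ Finset.range (n + 1 - 2 * k - 1), (1 - q ^ (2 * k + 2 + i)))
                / (1 - q) ^ (n + 1 - 2 * k - 1))
            * q ^ Nat.choose (2 * k) 2)
        + q ^ Nat.choose (n + 1) 2 * (if Even (n + 1) then 1 else 0) := by
  have hI : ∀ m, qI q m = (1 - q ^ m) / (1 - q) := by
    intro m
    rw [eq_div_iff h1]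
    have := geom_sum_mul q m
    unfold qI
    linear_combination -this
  induction n with
  | zero =>
    rw [Finset.filter_false_of_mem (by intro k _; omega)]
    simp [qR, qI]
  | succ n ih =>
    rw [qR, ih, mul_add, Finset.mul_sum]
    have e1 : ∀ k ∈ (Finset.range (n + 1 + 1)).filter
          (fun k => 2 ≤ 2 * k ∧ 2 * k ≤ n + 1 - 1),
        qI q (n + 1 + 1) * (((1 - q ^ (2 * k)) / (1 - q))
            * ((∏ i ∈ Finset.range (n + 1 - 2 * k - 1), (1 - q ^ (2 * k + 2 + i)))
                / (1 - q) ^ (n + 1 - 2 * k - 1))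
            * q ^ Nat.choose (2 * k) 2)
        = ((1 - q ^ (2 * k)) / (1 - q))
            * ((∏ i ∈ Finset.range (n + 1 + 1 - 2 * k - 1), (1 - q ^ (2 * k + 2 + i)))
                / (1 - q) ^ (n + 1 + 1 - 2 * k - 1))
            * q ^ Nat.choose (2 * k) 2 := by
      intro k hk
      rw [Finset.mem_filter] at hk
      have hk2 := hk.2
      obtain ⟨j, hj⟩ : ∃ j, n = 2 * k + j := ⟨n - 2 * k, by omega⟩
      rw [show n + 1 - 2 * k - 1 = j by omega, show n + 1 + 1 - 2 * k - 1 = j + 1 by omega,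
        Finset.prod_range_succ, hI, show n + 1 + 1 = 2 * k + 2 + j by omega]
      field_simp
      ring
    rw [Finset.sum_congr rfl e1]
    have hc : Nat.choose (n + 1 + 1) 2 = (n + 1) + Nat.choose (n + 1) 2 := by
      rw [Nat.choose_succ_succ' (n + 1) 1, Nat.choose_one_right]
    rcases Nat.even_or_odd n with he | ho
    · have s : (Finset.range (n + 1 + 1 + 1)).filter (fun k => 2 ≤ 2 * k ∧ 2 * k ≤ n + 1 + 1 - 1)
          = (Finset.range (n + 1 + 1)).filter (fun k => 2 ≤ 2 * k ∧ 2 * k ≤ n + 1 - 1) := by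
        obtain ⟨r, hr⟩ := he
        ext k
        simp only [Finset.mem_filter, Finset.mem_range]
        omega
      rw [s]
      have a : ¬ Even (n + 1) := by simpa [Nat.even_add_one] using he
      have b : Even (n + 1 + 1) := by simpa [Nat.even_add_one] using he
      rw [if_neg a, if_pos b, b.neg_one_pow]
      ring
    · obtain ⟨r, hr⟩ := ho
      have s : (Finset.range (n + 1 + 1 + 1)).filter (fun k => 2 ≤ 2 * k ∧ 2 * k ≤ n + 1 + 1 - 1)
          = insert (r + 1)
            ((Finset.range (n + 1 + 1)).filter (fun k => 2 ≤ 2 * k ∧ 2 * k ≤ n + 1 - 1)) := by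
        ext k
        simp only [Finset.mem_filter, Finset.mem_range, Finset.mem_insert]
        omega
      rw [s, Finset.sum_insert (by simp only [Finset.mem_filter, Finset.mem_range]; omega)]
      have b : Even (n + 1) := ⟨r + 1, by omega⟩
      have a : ¬ Even (n + 1 + 1) := by simpa [Nat.even_add_one] using b
      rw [if_pos b, if_neg a, (Nat.not_even_iff_odd.1 a).neg_one_pow,
        show n + 1 + 1 - 2 * (r + 1) - 1 = 0 by omega, show 2 * (r + 1) = n + 1 by omega, hI, hc]
      simp only [Finset.range_zero, Finset.prod_empty, pow_zero]
      field_simp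
      ring

/-- The word obtained by putting the letters of `w` at the positions in `S`, and zeros elsewhere. -/
def shuf (S : Finset ℕ) (w : ℕ → ℤ) : ℕ → ℤ :=
  fun i => if i ∈ S then w (S.filter (fun j => j < i)).card else 0

theorem majStat_congr (n : ℕ) (x y : ℕ → ℤ)
    (h : ∀ i, i + 1 < n → (x (i + 1) < x i ↔ y (i + 1) < y i)) : majStat n x = majStat n y := by
  unfold majStat
  refine Finset.sum_congr rfl fun i hi => ?_
  rw [Finset.mem_range] at hi
  simp only [h i (by omega)]

theorem majStat_succ (n : ℕ) (x : ℕ → ℤ) :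
    majStat (n + 2) x = majStat (n + 1) x + if x (n + 1) < x n then n + 1 else 0 := by
  unfold majStat
  exact Finset.sum_range_succ _ _

theorem shuf_insert_lt (S : Finset ℕ) (w : ℕ → ℤ) (n i : ℕ) (hi : i < n) :
    shuf (insert n S) w i = shuf S w i := by
  unfold shuf
  have : (insert n S).filter (fun j => j < i) = S.filter (fun j => j < i) := by
    rw [Finset.filter_insert, if_neg (by omega)]
  rw [this]
  simp [hi.ne]

theorem shuf_insert_self (S : Finset ℕ) (w : ℕ → ℤ) (n : ℕ) (hS : S ⊆ Finset.range n) :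
    shuf (insert n S) w n = w S.card := by
  unfold shuf
  have : (insert n S).filter (fun j => j < n) = S := by
    rw [Finset.filter_insert, if_neg (by omega), Finset.filter_true_of_mem]
    intro j hj
    exact Finset.mem_range.1 (hS hj)
  rw [this]
  simp

theorem shuf_notMem (S : Finset ℕ) (w : ℕ → ℤ) (n : ℕ) (hS : n ∉ S) :
    shuf S w n = 0 := by
  simp [shuf, hS]

theorem maj_shuf_insert (S : Finset ℕ) (w : ℕ → ℤ) (n : ℕ) :
    majStat n (shuf (insert n S) w) = majStat n (shuf S w) := by
  apply majStat_congr
  intro i hi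
  rw [shuf_insert_lt _ _ _ _ (by omega), shuf_insert_lt _ _ _ _ (by omega)]

theorem sum_powersetCard_range {K : Type*} [CommRing K] (n m : ℕ) (f : Finset ℕ → K) :
    ∑ S ∈ Finset.powersetCard (m + 1) (Finset.range (n + 1)), f S
      = ∑ S ∈ Finset.powersetCard (m + 1) (Finset.range n), f S
        + ∑ S ∈ Finset.powersetCard m (Finset.range n), f (insert n S) := by
  rw [Finset.range_add_one, Finset.powersetCard_succ_insert Finset.notMem_range_self,
    Finset.sum_union, Finset.sum_image]
  · intro S hS T hT h
    rw [Finset.mem_coe, Finset.mem_powersetCard] at hS hT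
    have a : n ∉ S := fun h => Finset.notMem_range_self (hS.1 h)
    have b : n ∉ T := fun h => Finset.notMem_range_self (hT.1 h)
    rw [← Finset.erase_insert a, ← Finset.erase_insert b, h]
  · rw [Finset.disjoint_left]
    intro S hS hT
    rw [Finset.mem_powersetCard] at hS
    rw [Finset.mem_image] at hT
    obtain ⟨T, _, rfl⟩ := hT
    exact Finset.notMem_range_self (hS.1 (Finset.mem_insert_self _ _))

section shuffle
variable {K : Type*} [CommRing K] (q : K)

theorem notMem_of_pc {m n k : ℕ} {S : Finset ℕ}
    (hS : S ∈ Finset.powersetCard m (Finset.range n)) (hk : n ≤ k) : k ∉ S := by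
  intro h
  have := Finset.mem_range.1 ((Finset.mem_powersetCard.1 hS).1 h)
  omega

theorem shuffle_aux (w : ℕ → ℤ) (hw : ∀ i, w i ≠ 0) (n : ℕ) :
    (∀ m, ∑ S ∈ Finset.powersetCard m (Finset.range n), q ^ majStat (n + 1) (shuf S w)
      = q ^ majStat m w * (if 0 < w (m - 1) then q ^ m else 1) * qB q n m) ∧
    (∀ m, ∑ S ∈ Finset.powersetCard m (Finset.range n), q ^ majStat (n + 1) (shuf (insert n S) w)
      = q ^ majStat (m + 1) w * (if 0 < w m then 1 else q ^ (n - m)) * qB q n m) := by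
  induction n with
  | zero =>
    constructor
    · intro m
      cases m with
      | zero => simp [majStat, qB_zero_right]
      | succ m =>
        rw [Finset.powersetCard_eq_empty.2 (by simp), qB_zero_succ]; simp
    · intro m
      cases m with
      | zero => simp [majStat, qB_zero_right]
      | succ m =>
        rw [Finset.powersetCard_eq_empty.2 (by simp), qB_zero_succ]; simp
  | succ n ih =>
    obtain ⟨ih0, ih1⟩ := ih
    have hempty : ∀ n, majStat n (shuf ∅ w) = 0 := by
      intro n; simp [majStat, shuf]
    constructor
    · intro m
      cases m with
      | zero => simp [hempty, qB_zero_right, show majStat 0 w = 0 from rfl]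
      | succ m =>
        rw [sum_powersetCard_range]
        have e0 : ∑ S ∈ Finset.powersetCard (m + 1) (Finset.range n),
            q ^ majStat (n + 1 + 1) (shuf S w)
            = ∑ S ∈ Finset.powersetCard (m + 1) (Finset.range n),
              q ^ majStat (n + 1) (shuf S w) := by
          refine Finset.sum_congr rfl fun S hS => ?_
          rw [majStat_succ, shuf_notMem _ _ _ (notMem_of_pc hS (by omega)),
            shuf_notMem _ _ _ (notMem_of_pc hS (by omega))]
          simp
        have e1 : ∑ S ∈ Finset.powersetCard m (Finset.range n),
            q ^ majStat (n + 1 + 1) (shuf (insert n S) w)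
            = (∑ S ∈ Finset.powersetCard m (Finset.range n),
              q ^ majStat (n + 1) (shuf (insert n S) w)) * (if 0 < w m then q ^ (n + 1) else 1) := by
          rw [Finset.sum_mul]
          refine Finset.sum_congr rfl fun S hS => ?_
          have hS' := Finset.mem_powersetCard.1 hS
          rw [majStat_succ, shuf_notMem _ _ (n + 1), shuf_insert_self _ _ _ hS'.1, hS'.2]
          · split_ifs <;> simp [pow_add]
          · rw [Finset.mem_insert, not_or]
            exact ⟨by omega, notMem_of_pc hS (by omega)⟩
        rw [e0, e1, ih0, ih1, Nat.add_sub_cancel]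
        split_ifs with h
        · have := qB_pascal' q n m
          rw [this]
          rcases lt_or_ge n m with h | h
          · rw [qB_eq_zero q n m h]; ring
          · have e : q ^ (n + 1) = q ^ (m + 1) * q ^ (n - m) := by
              rw [← pow_add]; congr 1; omega
            rw [e]; ring
        · rw [qB_pascal' q n m]
          ring
    · intro m
      cases m with
      | zero =>
        have h0 : shuf {n + 1} w (n + 1) = w 0 := by
          simpa using shuf_insert_self ∅ w (n + 1) (by simp)
        have h00 : shuf {n + 1} w n = 0 := by simp [shuf]
        have h2 := maj_shuf_insert ∅ w (n + 1)
        simp only [insert_empty_eq] at h2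
        simp only [Finset.powersetCard_zero, Finset.sum_singleton, insert_empty_eq, majStat_succ, h2,
          hempty, h0, h00, qB_zero_right, Nat.sub_zero]
        rcases lt_or_gt_of_ne (hw 0) with h | h
        · simp [h, h.not_gt, majStat]
        · simp [h, h.not_gt, majStat]
      | succ m =>
        rw [sum_powersetCard_range]
        have e0 : ∑ S ∈ Finset.powersetCard (m + 1) (Finset.range n),
            q ^ majStat (n + 1 + 1) (shuf (insert (n + 1) S) w)
            = (∑ S ∈ Finset.powersetCard (m + 1) (Finset.range n),
              q ^ majStat (n + 1) (shuf S w)) * (if w (m + 1) < 0 then q ^ (n + 1) else 1) := by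
          rw [Finset.sum_mul]
          refine Finset.sum_congr rfl fun S hS => ?_
          have hS' := Finset.mem_powersetCard.1 hS
          rw [majStat_succ, shuf_insert_self _ _ _
            (hS'.1.trans (Finset.range_mono (by omega))), hS'.2, maj_shuf_insert,
            shuf_insert_lt _ _ _ _ (by omega), shuf_notMem _ _ n (notMem_of_pc hS (by omega))]
          split_ifs <;> simp [pow_add]
        have e1 : ∑ S ∈ Finset.powersetCard m (Finset.range n),
            q ^ majStat (n + 1 + 1) (shuf (insert (n + 1) (insert n S)) w)
            = (∑ S ∈ Finset.powersetCard m (Finset.range n),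
              q ^ majStat (n + 1) (shuf (insert n S) w)) *
                (if w (m + 1) < w m then q ^ (n + 1) else 1) := by
          rw [Finset.sum_mul]
          refine Finset.sum_congr rfl fun S hS => ?_
          have hS' := Finset.mem_powersetCard.1 hS
          have hsub : insert n S ⊆ Finset.range (n + 1) := by
            rw [Finset.range_add_one]; exact Finset.insert_subset_insert _ hS'.1
          rw [majStat_succ, shuf_insert_self _ _ _ hsub, maj_shuf_insert,
            shuf_insert_lt _ _ _ _ (by omega), shuf_insert_self _ _ _ hS'.1,
            Finset.card_insert_of_notMem (notMem_of_pc hS le_rfl), hS'.2]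
          split_ifs <;> simp [pow_add]
        rw [e0, e1, ih0, ih1, Nat.add_sub_cancel, majStat_succ m w,
          show n + 1 - (m + 1) = n - m by omega]
        rcases lt_or_ge n m with hnm | hnm
        · rw [qB_eq_zero q n m hnm, qB_eq_zero q n (m + 1) (by omega),
            qB_eq_zero q (n + 1) (m + 1) (by omega)]; ring
        have e : q ^ (n + 1) = q ^ (m + 1) * q ^ (n - m) := by
          rw [← pow_add]; congr 1; omega
        have p1 := qB_pascal q n m
        have p2 := qB_pascal' q n m
        rcases lt_or_gt_of_ne (hw m) with h | h <;>
        rcases lt_or_gt_of_ne (hw (m + 1)) with h' | h' <;>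
        by_cases h'' : w (m + 1) < w m <;>
        simp only [h, h', h'', h.not_gt, h'.not_gt, if_true, if_false, e, pow_add, pow_zero] <;>
        first
        | (exfalso; omega)
        | (rw [p1]; ring1)
        | (rw [p2]; ring1)

theorem shuffle_sum (w : ℕ → ℤ) (hw : ∀ i, w i ≠ 0) (n m : ℕ) :
    ∑ S ∈ Finset.powersetCard m (Finset.range n), q ^ majStat n (shuf S w)
      = q ^ majStat m w * qB q n m := by
  cases n with
  | zero =>
    cases m with
    | zero => simp [majStat, qB_zero_right]
    | succ m =>
      rw [Finset.powersetCard_eq_empty.2 (by simp), qB_zero_succ]; simp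
  | succ n =>
    cases m with
    | zero => simp [majStat, qB_zero_right, shuf]
    | succ m =>
      rw [sum_powersetCard_range, (shuffle_aux q w hw n).1, (shuffle_aux q w hw n).2,
        Nat.add_sub_cancel]
      split_ifs
      · rw [qB_pascal]; ring
      · rw [qB_pascal']; ring

end shuffle

section perms
variable {K : Type*} [CommRing K] (q : K)

/-- insert the largest letter at position `p` -/
def insMax (n : ℕ) (p : Fin (n + 1)) (τ : Equiv.Perm (Fin n)) : Equiv.Perm (Fin (n + 1)) :=
  (finSuccEquiv' p).trans ((Equiv.optionCongr τ).trans (finSuccEquiv' (Fin.last n)).symm)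

theorem insMax_self (n : ℕ) (p : Fin (n + 1)) (τ : Equiv.Perm (Fin n)) :
    insMax n p τ p = Fin.last n := by
  simp [insMax]

theorem insMax_succAbove (n : ℕ) (p : Fin (n + 1)) (τ : Equiv.Perm (Fin n)) (i : Fin n) :
    insMax n p τ (p.succAbove i) = (τ i).castSucc := by
  simp [insMax]

theorem insMax_bij (n : ℕ) :
    Function.Bijective (fun x : Fin (n + 1) × Equiv.Perm (Fin n) => insMax n x.1 x.2) := by
  rw [Fintype.bijective_iff_injective_and_card]
  constructor
  · rintro ⟨p, τ⟩ ⟨p', τ'⟩ h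
    simp only at h
    have hp : p = p' := by
      apply (insMax n p' τ').injective
      rw [insMax_self, ← h, insMax_self]
    subst hp
    have : τ = τ' := by
      ext i
      have := congrArg (fun σ => σ (p.succAbove i)) h
      simp only [insMax_succAbove] at this
      rw [Fin.castSucc_injective _ this]
    rw [this]
  · simp [Fintype.card_perm, Nat.factorial_succ]

theorem sum_erase (n : ℕ) (f : Finset ℕ → K) :
    ∑ p : Fin (n + 1), f ((Finset.range (n + 1)).erase p)
      = ∑ S ∈ Finset.powersetCard n (Finset.range (n + 1)), f S := by
  have inj : Function.Injective (fun p : Fin (n + 1) => (Finset.range (n + 1)).erase (p : ℕ)) := by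
    intro p p' h
    by_contra hne
    have : (p : ℕ) ∈ (Finset.range (n + 1)).erase (p' : ℕ) := by
      simp only [Finset.mem_erase, Finset.mem_range]
      exact ⟨fun h => hne (Fin.ext h), p.2⟩
    simp only at h
    rw [← h] at this
    simp at this
  have im : Finset.powersetCard n (Finset.range (n + 1))
      = Finset.univ.image (fun p : Fin (n + 1) => (Finset.range (n + 1)).erase (p : ℕ)) := by
    symm
    apply Finset.eq_of_subset_of_card_le
    · intro S hS
      rw [Finset.mem_image] at hS
      obtain ⟨p, _, rfl⟩ := hS
      rw [Finset.mem_powersetCard]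
      refine ⟨Finset.erase_subset _ _, ?_⟩
      rw [Finset.card_erase_of_mem (Finset.mem_range.2 p.2)]
      simp
    · rw [Finset.card_image_of_injective _ inj]
      simp
  rw [im, Finset.sum_image (fun a _ b _ h => inj h)]

/-- negative version of the word of a permutation -/
def negWord (n : ℕ) (τ : Equiv.Perm (Fin n)) : ℕ → ℤ :=
  fun i => if h : i < n then ((τ ⟨i, h⟩ : ℕ) : ℤ) - n else -1

theorem pword_apply (n : ℕ) (σ : Equiv.Perm (Fin n)) (i : Fin n) :
    pword n σ i = ((σ i : ℕ) : ℤ) + 1 := by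
  simp [pword]

theorem card_erase_filter (n : ℕ) (p : Fin (n + 1)) (j : Fin n) :
    (((Finset.range (n + 1)).erase (p : ℕ)).filter
      (fun k => k < (p.succAbove j : ℕ))).card = j := by
  rcases lt_or_ge j.castSucc p with h | h
  · rw [Fin.succAbove_of_castSucc_lt _ _ h]
    have h' : (j : ℕ) < p := h
    have : ((Finset.range (n + 1)).erase (p : ℕ)).filter (fun k => k < (j.castSucc : ℕ))
        = Finset.range j := by
      ext k
      simp only [Finset.mem_filter, Finset.mem_erase, Finset.mem_range, Fin.val_castSucc]
      omega
    rw [this, Finset.card_range]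
  · rw [Fin.succAbove_of_le_castSucc _ _ h]
    have h' : (p : ℕ) ≤ j := h
    have : ((Finset.range (n + 1)).erase (p : ℕ)).filter (fun k => k < (j.succ : ℕ))
        = (Finset.range (j + 1)).erase p := by
      ext k
      simp only [Finset.mem_filter, Finset.mem_erase, Finset.mem_range, Fin.val_succ]
      omega
    rw [this, Finset.card_erase_of_mem (by rw [Finset.mem_range]; omega), Finset.card_range]
    rfl

theorem maj_insMax (n : ℕ) (p : Fin (n + 1)) (τ : Equiv.Perm (Fin n)) :
    majStat (n + 1) (pword (n + 1) (insMax n p τ))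
      = majStat (n + 1) (shuf ((Finset.range (n + 1)).erase p) (negWord n τ)) := by
  have H : ∀ i : Fin (n + 1), shuf ((Finset.range (n + 1)).erase p) (negWord n τ) i
      = pword (n + 1) (insMax n p τ) i - (n + 1) := by
    intro i
    rw [pword_apply]
    rcases Fin.eq_self_or_eq_succAbove p i with h | ⟨j, h⟩
    · subst h
      rw [insMax_self, shuf_notMem _ _ _ (by simp)]
      simp
    · subst h
      rw [insMax_succAbove]
      unfold shuf
      have hm : (p.succAbove j : ℕ) ∈ (Finset.range (n + 1)).erase (p : ℕ) := by
        rw [Finset.mem_erase, Finset.mem_range]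
        exact ⟨fun h => Fin.succAbove_ne p j (Fin.ext h), (p.succAbove j).2⟩
      rw [if_pos hm, card_erase_filter]
      simp [negWord]
  apply majStat_congr
  intro i hi
  have a := H ⟨i, by omega⟩
  have b := H ⟨i + 1, hi⟩
  simp only at a b
  rw [a, b]
  omega

theorem macmahon (n : ℕ) :
    ∑ σ : Equiv.Perm (Fin n), q ^ majStat n (pword n σ) = ∏ i ∈ Finset.range n, qI q (i + 1) := by
  induction n with
  | zero => simp [majStat]
  | succ n ih =>
    rw [Finset.prod_range_succ, ← ih, ← Function.Bijective.sum_comp (insMax_bij n),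
      Fintype.sum_prod_type_right, Finset.sum_mul]
    refine Finset.sum_congr rfl fun τ _ => ?_
    simp only [maj_insMax]
    rw [sum_erase n (fun S => q ^ majStat (n + 1) (shuf S (negWord n τ))), shuffle_sum,
      qB_succ_self]
    · congr 2
      apply majStat_congr
      intro i hi
      simp only [negWord, pword, hi, (by omega : i < n), dif_pos]
      omega
    · intro i
      unfold negWord
      split_ifs with h
      · have := (τ ⟨i, h⟩).2
        omega
      · omega

/-- excedances are made positive, subexcedances negative -/
def excWord (m : ℕ) (τ : Equiv.Perm (Fin m)) : ℕ → ℤ :=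
  fun i => if h : i < m then
    (if i < (τ ⟨i, h⟩ : ℕ) then ((τ ⟨i, h⟩ : ℕ) : ℤ) + 1 else ((τ ⟨i, h⟩ : ℕ) : ℤ) - m) else 1

theorem excWord_ne (m : ℕ) (τ : Equiv.Perm (Fin m)) (i : ℕ) : excWord m τ i ≠ 0 := by
  unfold excWord
  split_ifs with h
  · omega
  · have := (τ ⟨i, h⟩).2
    omega
  · omega

theorem excWord_apply (m : ℕ) (τ : Equiv.Perm (Fin m)) (i : Fin m) :
    excWord m τ i = if (i : ℕ) < (τ i : ℕ) then ((τ i : ℕ) : ℤ) + 1 else ((τ i : ℕ) : ℤ) - m := by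
  simp [excWord]

theorem maj_excWord (m : ℕ) (τ : Equiv.Perm (Fin m)) (hτ : ∀ i, τ i ≠ i) :
    majStat m (excWord m τ) = majStat m (pword m τ) := by
  apply majStat_congr
  intro i hi
  have a := excWord_apply m τ ⟨i, by omega⟩
  have b := excWord_apply m τ ⟨i + 1, hi⟩
  have c := pword_apply m τ ⟨i, by omega⟩
  have d := pword_apply m τ ⟨i + 1, hi⟩
  have e : (τ ⟨i, by omega⟩ : ℕ) ≠ i := fun h => hτ ⟨i, by omega⟩ (Fin.ext h)
  have f : (τ ⟨i + 1, hi⟩ : ℕ) ≠ i + 1 := fun h => hτ ⟨i + 1, hi⟩ (Fin.ext h)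
  have g := (τ ⟨i, by omega⟩).2
  have g' := (τ ⟨i + 1, hi⟩).2
  simp only at a b c d
  rw [a, b, c, d]
  split_ifs <;> omega

theorem maj_shuf_exc (n m : ℕ) (S : Finset ℕ) (τ : Equiv.Perm (Fin m)) (hτ : ∀ i, τ i ≠ i)
    (σ : Equiv.Perm (Fin n)) (e : Fin m → ℕ) (he : StrictMono e)
    (heS : ∀ j, e j ∈ S) (hS : ∀ i ∈ S, ∃ j, e j = i)
    (hc : ∀ j, (S.filter (fun k => k < e j)).card = j)
    (h1 : ∀ j, pword n σ (e j) = (e (τ j) : ℤ) + 1)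
    (h2 : ∀ i, i < n → i ∉ S → pword n σ i = (i : ℤ) + 1) :
    majStat n (pword n σ) = majStat n (shuf S (excWord m τ)) := by
  have hs : ∀ j, shuf S (excWord m τ) (e j) = excWord m τ j := by
    intro j
    simp [shuf, heS, hc]
  have hlt : ∀ a b : Fin m, ((a : ℕ) < (b : ℕ) ↔ e a < e b) := fun a b => he.lt_iff_lt.symm
  apply majStat_congr
  intro i hi
  by_cases hi0 : i ∈ S <;> by_cases hi1 : i + 1 ∈ S
  · obtain ⟨j, hj⟩ := hS _ hi0
    obtain ⟨k, hk⟩ := hS _ hi1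
    have a := h1 j
    have b := h1 k
    have c := hs j
    have d := hs k
    rw [excWord_apply] at c d
    have x1 := hlt j (τ j)
    have x2 := hlt k (τ k)
    have x3 := hlt (τ j) (τ k)
    have x3' := hlt (τ k) (τ j)
    have x4 : e (τ j) ≠ e j := fun h => hτ j (he.injective h)
    have x5 : e (τ k) ≠ e k := fun h => hτ k (he.injective h)
    have g := (τ j).2
    have g' := (τ k).2
    rw [hj] at a c x1 x4
    rw [hk] at b d x2 x5
    rw [a, b, c, d]
    split_ifs <;> omega
  · obtain ⟨j, hj⟩ := hS _ hi0
    have a := h1 j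
    have b := h2 (i + 1) hi hi1
    have c := hs j
    have d := shuf_notMem S (excWord m τ) _ hi1
    rw [excWord_apply] at c
    have x1 := hlt j (τ j)
    have x4 : e (τ j) ≠ e j := fun h => hτ j (he.injective h)
    have x5 : e (τ j) ≠ i + 1 := fun h => hi1 (h ▸ heS _)
    have g := (τ j).2
    rw [hj] at a c x1 x4
    rw [a, b, c, d]
    split_ifs <;> omega
  · obtain ⟨k, hk⟩ := hS _ hi1
    have a := h2 i (by omega) hi0
    have b := h1 k
    have c := shuf_notMem S (excWord m τ) _ hi0
    have d := hs k
    rw [excWord_apply] at d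
    have x2 := hlt k (τ k)
    have x4 : e (τ k) ≠ i := fun h => hi0 (h ▸ heS _)
    have x5 : e (τ k) ≠ e k := fun h => hτ k (he.injective h)
    have g' := (τ k).2
    rw [hk] at b d x2 x5
    rw [a, b, c, d]
    split_ifs <;> omega
  · rw [h2 i (by omega) hi0, h2 (i + 1) hi hi1, shuf_notMem _ _ _ hi0, shuf_notMem _ _ _ hi1]
    omega

/-- the set of nonfixed points, as naturals -/
def nonfix (n : ℕ) (σ : Equiv.Perm (Fin n)) : Finset ℕ :=
  (Finset.univ.filter (fun i : Fin n => σ i ≠ i)).image (fun i : Fin n => (i : ℕ))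

theorem mem_nonfix (n : ℕ) (σ : Equiv.Perm (Fin n)) (i : Fin n) :
    (i : ℕ) ∈ nonfix n σ ↔ σ i ≠ i := by
  unfold nonfix
  rw [Finset.mem_image]
  constructor
  · rintro ⟨j, hj, h⟩
    rw [← Fin.ext h]
    exact (Finset.mem_filter.1 hj).2
  · intro h
    exact ⟨i, by simpa using h, rfl⟩

theorem nonfix_eq_iff (n : ℕ) (σ : Equiv.Perm (Fin n)) (S : Finset ℕ) (hS : S ⊆ Finset.range n) :
    nonfix n σ = S ↔ ∀ a : Fin n, ¬ ((a : ℕ) ∈ S) ↔ a ∈ Function.fixedPoints σ := by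
  simp only [Function.mem_fixedPoints, Function.IsFixedPt]
  constructor
  · rintro rfl a
    rw [mem_nonfix, not_not]
  · intro h
    ext i
    by_cases hi : i < n
    · have := h ⟨i, hi⟩
      have h2 := mem_nonfix n σ ⟨i, hi⟩
      simp only at this h2
      rw [h2, ne_eq, ← this, not_not]
    · refine ⟨fun h => ?_, fun h => absurd (Finset.mem_range.1 (hS h)) hi⟩
      unfold nonfix at h
      rw [Finset.mem_image] at h
      obtain ⟨j, _, rfl⟩ := h
      exact absurd j.2 hi

theorem fiber_sum (n m : ℕ) (S : Finset ℕ) (hS : S ⊆ Finset.range n) (hm : S.card = m) :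
    ∑ σ ∈ Finset.univ.filter (fun σ : Equiv.Perm (Fin n) => nonfix n σ = S),
        q ^ majStat n (pword n σ)
      = ∑ τ ∈ Finset.univ.filter (fun σ : Equiv.Perm (Fin m) => ∀ i, σ i ≠ i),
        q ^ majStat n (shuf S (excWord m τ)) := by
  let p : Fin n → Prop := fun a => (a : ℕ) ∈ S
  let e0 : Fin m → ℕ := S.orderEmbOfFin hm
  have he0 : ∀ j, e0 j ∈ S := S.orderEmbOfFin_mem hm
  have hmono : StrictMono e0 := (S.orderEmbOfFin hm).strictMono
  have hsurj : ∀ i ∈ S, ∃ j, e0 j = i := by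
    intro i hi
    have : i ∈ Set.range (S.orderEmbOfFin hm) := by
      rw [Finset.range_orderEmbOfFin]; exact hi
    exact this
  have hlt : ∀ j, e0 j < n := fun j => Finset.mem_range.1 (hS (he0 j))
  let e : Fin m ≃ Subtype p := Equiv.ofBijective (fun j => ⟨⟨e0 j, hlt j⟩, he0 j⟩) (by
    constructor
    · intro a b h
      apply hmono.injective
      simpa using h
    · rintro ⟨⟨i, hi⟩, h⟩
      obtain ⟨j, rfl⟩ := hsurj i h
      exact ⟨j, rfl⟩)
  let Φ := (Equiv.derangementsCongr e).trans (derangements.subtypeEquiv p)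
  have hΦ : ∀ τ j, ((Φ τ).1 ⟨e0 j, hlt j⟩ : Fin n) = ⟨e0 (τ.1 j), hlt _⟩ := by
    intro τ j
    have h1 : (Φ τ).1 = Equiv.Perm.ofSubtype (e.permCongr τ.1) := rfl
    rw [h1, Equiv.Perm.ofSubtype_apply_of_mem _ (show p ⟨e0 j, hlt j⟩ from he0 j)]
    have h2 : (⟨⟨e0 j, hlt j⟩, he0 j⟩ : Subtype p) = e j := rfl
    rw [h2, Equiv.permCongr_apply, Equiv.symm_apply_apply]
    rfl
  have hcount : ∀ j, (S.filter (fun k => k < e0 j)).card = j := by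
    intro j
    have : S.filter (fun k => k < e0 j) = (Finset.Iio j).map (S.orderEmbOfFin hm).toEmbedding := by
      ext i
      rw [Finset.mem_filter, Finset.mem_map]
      constructor
      · rintro ⟨hi, hij⟩
        obtain ⟨k, rfl⟩ := hsurj i hi
        exact ⟨k, Finset.mem_Iio.2 (hmono.lt_iff_lt.1 hij), rfl⟩
      · rintro ⟨k, hk, rfl⟩
        exact ⟨he0 k, hmono (Finset.mem_Iio.1 hk)⟩
    rw [this, Finset.card_map, Fin.card_Iio]
  symm
  refine Finset.sum_bij (fun τ hτ => (Φ ⟨τ, (Finset.mem_filter.1 hτ).2⟩).1) ?_ ?_ ?_ ?_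
  · intro τ hτ
    rw [Finset.mem_filter]
    exact ⟨Finset.mem_univ _, (nonfix_eq_iff n _ S hS).2 (Φ _).2⟩
  · intro τ hτ τ' hτ' h
    have := Φ.injective (Subtype.ext h)
    exact congrArg Subtype.val this
  · intro σ hσ
    have h := (nonfix_eq_iff n σ S hS).1 (Finset.mem_filter.1 hσ).2
    refine ⟨(Φ.symm ⟨σ, h⟩).1, ?_, ?_⟩
    · rw [Finset.mem_filter]
      exact ⟨Finset.mem_univ _, (Φ.symm ⟨σ, h⟩).2⟩
    · exact congrArg Subtype.val (Φ.apply_symm_apply ⟨σ, h⟩)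
  · intro τ hτ
    congr 1
    symm
    apply maj_shuf_exc n m S τ (Finset.mem_filter.1 hτ).2 _ e0 hmono he0 hsurj hcount
    · intro j
      have := pword_apply n (Φ ⟨τ, (Finset.mem_filter.1 hτ).2⟩).1 ⟨e0 j, hlt j⟩
      rw [hΦ] at this
      exact this
    · intro i hi hiS
      have := pword_apply n (Φ ⟨τ, (Finset.mem_filter.1 hτ).2⟩).1 ⟨i, hi⟩
      have hfix : (Φ ⟨τ, (Finset.mem_filter.1 hτ).2⟩).1 ⟨i, hi⟩ = ⟨i, hi⟩ :=
        ((Φ ⟨τ, (Finset.mem_filter.1 hτ).2⟩).2 ⟨i, hi⟩).1 hiS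
      rw [hfix] at this
      exact this

theorem Dmaj_sum (n : ℕ) :
    ∑ m ∈ Finset.range (n + 1), qB q n m * Dmaj q m = ∏ i ∈ Finset.range n, qI q (i + 1) := by
  rw [← macmahon]
  have hmaps : ∀ σ ∈ (Finset.univ : Finset (Equiv.Perm (Fin n))),
      nonfix n σ ∈ (Finset.range n).powerset := by
    intro σ _
    rw [Finset.mem_powerset]
    intro i hi
    unfold nonfix at hi
    rw [Finset.mem_image] at hi
    obtain ⟨j, _, rfl⟩ := hi
    exact Finset.mem_range.2 j.2
  rw [← Finset.sum_fiberwise_of_maps_to hmaps, Finset.sum_powerset, Finset.card_range]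
  refine Finset.sum_congr rfl fun m _ => ?_
  have : ∀ S ∈ Finset.powersetCard m (Finset.range n), _ = _ := fun S hS =>
    fiber_sum q n m S (Finset.mem_powersetCard.1 hS).1 (Finset.mem_powersetCard.1 hS).2
  rw [Finset.sum_congr rfl this, Finset.sum_comm, Dmaj, Finset.mul_sum]
  refine Finset.sum_congr rfl fun τ hτ => ?_
  rw [shuffle_sum q _ (excWord_ne m τ), maj_excWord m τ (Finset.mem_filter.1 hτ).2, mul_comm]

theorem Dmaj_eq_qR (n : ℕ) : Dmaj q n = qR q n := eq_qR q (Dmaj q) (Dmaj_sum q) n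

end perms

theorem stmt17 (K : Type*) [Field K] (q : K) (h1 : (1 : K) - q ≠ 0) (n : ℕ) (hn : 1 ≤ n) :
    Dmaj q n
      = (∑ k ∈ (Finset.range (n + 1)).filter (fun k => 2 ≤ 2 * k ∧ 2 * k ≤ n - 1),
          ((1 - q ^ (2 * k)) / (1 - q))
            * ((∏ i ∈ Finset.range (n - 2 * k - 1), (1 - q ^ (2 * k + 2 + i)))
                / (1 - q) ^ (n - 2 * k - 1))
            * q ^ Nat.choose (2 * k) 2)
        + q ^ Nat.choose n 2 * (if Even n then 1 else 0) := by
  obtain ⟨m, rfl⟩ : ∃ m, n = m + 1 := ⟨n - 1, by omega⟩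
  rw [Dmaj_eq_qR, qR_closed q h1 m]
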